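/- arXiv:1209.4632 — 3 statements merged into one kernel-verified Lean document; each statement's English description precedes it below -/
import Mathlib

section
/- The real polynomial Bohnenblust–Hille constants satisfy limsup_{m→∞} D_{ℝ,m}^{1/m} ≥ 2. -/
open MvPolynomial Filter

/-- The sup norm of a real polynomial in `n` variables over the cube `[-1,1]^n`. -/
noncomputable def supNorm {n : ℕ} (P : MvPolynomial (Fin n) ℝ) : ℝ :=
  sSup {y : ℝ | ∃ x : Fin n → ℝ, (∀ i, |x i| ≤ 1) ∧ y = |eval x P|}

/-- The `ℓ_p` norm of the coefficients of a real polynomial. -/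
noncomputable def lpNorm {n : ℕ} (p : ℝ) (P : MvPolynomial (Fin n) ℝ) : ℝ :=
  (∑ α ∈ P.support, |coeff α P| ^ p) ^ (1 / p)

/-- The real polynomial Bohnenblust–Hille constant `D_{ℝ,m}`. -/
noncomputable def BHconst (m : ℕ) : ℝ :=
  sInf {D : ℝ | 0 < D ∧ ∀ (n : ℕ) (P : MvPolynomial (Fin n) ℝ),
    P.IsHomogeneous m → lpNorm (2 * m / (m + 1)) P ≤ D * supNorm P}

/-- The real polynomial Bohnenblust–Hille constant `D_{ℝ,m}(n)` in a fixed number `n`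
of variables. -/
noncomputable def BHconstN (m n : ℕ) : ℝ :=
  sInf {D : ℝ | 0 < D ∧ ∀ P : MvPolynomial (Fin n) ℝ,
    P.IsHomogeneous m → lpNorm (2 * m / (m + 1)) P ≤ D * supNorm P}

/-!
For the lower bound, test the inequality with the Vandermonde polynomial `∏ i < j, (X j - X i)` in
`n` variables, of degree `n.choose 2`. Its coefficients are integers, so its `ℓ_p` norm is at least
`1`. On the cube, column operations turn the Vandermonde matrix into the matrix of values of the
Chebyshev polynomials `T j`, whose entries are at most `1` in absolute value; since `T j` has
leading coefficient `2 ^ (j - 1)`, the sup norm is at most `n! * 2 ^ n / 2 ^ n.choose 2`. The factor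
`n! * 2 ^ n` is negligible after taking roots of order `n.choose 2`.

This says something about the real-valued `sInf` and `limsup` only if the constants are finite and
grow at most exponentially. For homogeneous `P` of degree `m`, the maximum principle bounds `P` on
the polydisc of radius `2` by `4 ^ m * ‖P‖`, and Cauchy's estimate then bounds
`∑ k, |∂P/∂z k|` on the torus. The `L¹`–`L²` inequality on the torus with constant `2 ^ m`, which
comes from comparing second and fourth moments, converts this into a bound on the sum of the `ℓ₂`
norms of the slices of the coefficients. Hölder's inequality with weights `∏ k, w k ^ α k` formed
from these slice norms, together with the AM-GM inequality, bounds the `ℓ_{2m/(m+1)}` norm of the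
coefficients by `8 ^ m * ‖P‖`.
-/

section MultiIndices

variable {σ : Type*} [Fintype σ]

theorem sum_prod_pow_le_sum_pow {m : ℕ} {s : Finset (σ →₀ ℕ)} (hs : ∀ α ∈ s, α.degree = m)
    {w : σ → ℝ} (hw : ∀ i, 0 ≤ w i) : ∑ α ∈ s, ∏ i, w i ^ α i ≤ (∑ i, w i) ^ m := by
  classical
  have hprod (a : σ → ℕ) : 0 ≤ ∏ i, w i ^ a i := Finset.prod_nonneg fun i _ => pow_nonneg (hw i) _
  calc ∑ α ∈ s, ∏ i, w i ^ α i
      = ∑ a ∈ s.map ⟨(⇑), DFunLike.coe_injective⟩, ∏ i, w i ^ a i := by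
        rw [Finset.sum_map, Function.Embedding.coeFn_mk]
    _ ≤ ∑ a ∈ Finset.univ.piAntidiag m, ∏ i, w i ^ a i := by
        refine Finset.sum_le_sum_of_subset_of_nonneg (fun a ha => ?_) fun a _ _ => hprod a
        obtain ⟨α, hα, rfl⟩ := Finset.mem_map.1 ha
        simpa [Finsupp.degree_eq_sum] using hs α hα
    _ ≤ ∑ a ∈ Finset.univ.piAntidiag m, Nat.multinomial Finset.univ a * ∏ i, w i ^ a i :=
        Finset.sum_le_sum fun a _ => le_mul_of_one_le_left (hprod a) <|
          mod_cast Nat.multinomial_pos _ _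
    _ = (∑ i, w i) ^ m := (Finset.sum_pow_eq_sum_piAntidiag _ _ _).symm

theorem inv_prod_pow_rpow_le_sum_div_degree {α : σ →₀ ℕ} (hα : α ≠ 0) {w : σ → ℝ}
    (hw : ∀ i, 0 ≤ w i) :
    (∏ i, w i ^ α i)⁻¹ ^ (α.degree : ℝ)⁻¹ ≤ (∑ i, α i / w i) / α.degree := by
  have hdeg : ∑ i, (α i : ℝ) = α.degree := by rw [Finsupp.degree_eq_sum, Nat.cast_sum]
  have hpos : (0 : ℝ) < ∑ i, (α i : ℝ) := by
    rw [hdeg, Nat.cast_pos, pos_iff_ne_zero]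
    exact mt (Finsupp.degree_eq_zero_iff α).1 hα
  simpa [hdeg, div_eq_mul_inv, Finset.prod_inv_distrib] using
    Real.geom_mean_le_arith_mean Finset.univ (fun i => (α i : ℝ)) (fun i => (w i)⁻¹)
      (fun _ _ => by positivity) hpos fun i _ => inv_nonneg.2 (hw i)

end MultiIndices

section Blei

theorem sum_rpow_le_rpow_mul_rpow {ι : Type*} (s : Finset ι) {t : ℝ} (ht : 0 < t) {c W : ι → ℝ}
    (hc : ∀ i ∈ s, 0 ≤ c i) (hW : ∀ i ∈ s, 0 < W i) :
    ∑ i ∈ s, c i ^ (2 * t / (t + 1)) ≤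
      (∑ i ∈ s, c i ^ 2 * (W i)⁻¹ ^ t⁻¹) ^ (t / (t + 1)) * (∑ i ∈ s, W i) ^ (1 / (t + 1)) := by
  have hconj : ((t + 1) / t).HolderConjugate (t + 1) := by
    rw [Real.holderConjugate_comm, Real.holderConjugate_iff]
    exact ⟨by linarith, by field_simp; ring⟩
  have hsplit (i) (hi : i ∈ s) : c i ^ (2 * t / (t + 1)) =
      (c i ^ 2 * (W i)⁻¹ ^ t⁻¹) ^ (t / (t + 1)) * W i ^ (1 / (t + 1)) := by
    have hcancel : (W i)⁻¹ ^ (t⁻¹ * (t / (t + 1))) * W i ^ (1 / (t + 1)) = 1 := by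
      rw [Real.inv_rpow (hW i hi).le, show t⁻¹ * (t / (t + 1)) = 1 / (t + 1) by field_simp]
      exact inv_mul_cancel₀ (Real.rpow_pos_of_pos (hW i hi) _).ne'
    have hWi : 0 ≤ (W i)⁻¹ := inv_nonneg.2 (hW i hi).le
    rw [Real.mul_rpow (sq_nonneg _) (by positivity), ← Real.rpow_natCast, ← Real.rpow_mul (hc i hi),
      ← Real.rpow_mul hWi, mul_assoc, hcancel, mul_one, Nat.cast_ofNat, mul_div_assoc]
  have hleft (i) (hi : i ∈ s) :
      ((c i ^ 2 * (W i)⁻¹ ^ t⁻¹) ^ (t / (t + 1))) ^ ((t + 1) / t) = c i ^ 2 * (W i)⁻¹ ^ t⁻¹ := by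
    have := hW i hi
    rw [← Real.rpow_mul (by positivity), div_mul_div_cancel₀ (by positivity), div_self ht.ne',
      Real.rpow_one]
  have hright (i) (hi : i ∈ s) : (W i ^ (1 / (t + 1))) ^ (t + 1) = W i := by
    rw [← Real.rpow_mul (hW i hi).le, one_div_mul_cancel (by positivity), Real.rpow_one]
  rw [Finset.sum_congr rfl hsplit]
  refine (Real.inner_le_Lp_mul_Lq_of_nonneg s hconj (fun i hi => ?_) fun i hi => ?_).trans_eq ?_
  · have := hW i hi
    positivity
  · exact Real.rpow_nonneg (hW i hi).le _
  · rw [Finset.sum_congr rfl hleft, Finset.sum_congr rfl hright, one_div_div]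

variable {σ R : Type*} [NormedCommRing R]

/-- The `ℓ₂` norm of the coefficients of `P`, in which the coefficient of `x ^ α` has multiplicity
`α k`. For the symmetric form of a homogeneous `P` this is, up to normalization, the `ℓ₂` norm of
the slice obtained by fixing one index to be `k`. -/
noncomputable def sliceNorm (P : MvPolynomial σ R) (k : σ) : ℝ :=
  √(∑ α ∈ P.support, α k * ‖coeff α P‖ ^ 2)

theorem sliceNorm_nonneg (P : MvPolynomial σ R) (k : σ) : 0 ≤ sliceNorm P k :=
  Real.sqrt_nonneg _

theorem sliceNorm_pos {P : MvPolynomial σ R} {α : σ →₀ ℕ} (hα : α ∈ P.support) {k : σ}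
    (hk : α k ≠ 0) : 0 < sliceNorm P k := by
  have hcoeff : 0 < ‖coeff α P‖ := norm_pos_iff.2 (mem_support_iff.1 hα)
  exact Real.sqrt_pos.2 (Finset.sum_pos' (fun _ _ => by positivity) ⟨α, hα, by positivity⟩)

theorem sum_sq_norm_coeff_mul_sum_div_sliceNorm [Fintype σ] (P : MvPolynomial σ R) :
    ∑ α ∈ P.support, ‖coeff α P‖ ^ 2 * ∑ k, α k / sliceNorm P k = ∑ k, sliceNorm P k := by
  simp only [Finset.mul_sum]
  rw [Finset.sum_comm]
  refine Finset.sum_congr rfl fun k _ => ?_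
  calc ∑ α ∈ P.support, ‖coeff α P‖ ^ 2 * (α k / sliceNorm P k)
      = (∑ α ∈ P.support, α k * ‖coeff α P‖ ^ 2) / sliceNorm P k := by
        rw [Finset.sum_div]
        exact Finset.sum_congr rfl fun α _ => by ring
    _ = sliceNorm P k := Real.div_sqrt

section Homogeneous

variable [Fintype σ] {m : ℕ} {P : MvPolynomial σ R}

theorem prod_sliceNorm_pow_pos {α : σ →₀ ℕ} (hα : α ∈ P.support) :
    0 < ∏ k, sliceNorm P k ^ α k :=
  Finset.prod_pos fun k _ => by
    rcases eq_or_ne (α k) 0 with hk | hk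
    · simp [hk]
    · exact pow_pos (sliceNorm_pos hα hk) _

theorem sum_sq_norm_coeff_mul_inv_prod_sliceNorm_rpow_le (hm : m ≠ 0) (hP : P.IsHomogeneous m) :
    ∑ α ∈ P.support, ‖coeff α P‖ ^ 2 * (∏ k, sliceNorm P k ^ α k)⁻¹ ^ (m : ℝ)⁻¹ ≤
      ∑ k, sliceNorm P k := by
  calc ∑ α ∈ P.support, ‖coeff α P‖ ^ 2 * (∏ k, sliceNorm P k ^ α k)⁻¹ ^ (m : ℝ)⁻¹
      ≤ ∑ α ∈ P.support, ‖coeff α P‖ ^ 2 * ∑ k, α k / sliceNorm P k := by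
        gcongr with α hα
        have hdeg : α.degree = m := (hP.degree_eq_sum_deg_support hα).symm
        have hα0 : α ≠ 0 := by
          rintro rfl
          exact hm (by simpa using hdeg.symm)
        have hamgm := inv_prod_pow_rpow_le_sum_div_degree hα0 (sliceNorm_nonneg P)
        rw [hdeg] at hamgm
        exact hamgm.trans <| div_le_self
          (Finset.sum_nonneg fun k _ => div_nonneg (Nat.cast_nonneg _) (sliceNorm_nonneg P k))
          (mod_cast Nat.one_le_iff_ne_zero.2 hm)
    _ = ∑ k, sliceNorm P k := sum_sq_norm_coeff_mul_sum_div_sliceNorm P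

theorem sum_norm_coeff_rpow_le_sum_sliceNorm_rpow (hm : m ≠ 0) (hP : P.IsHomogeneous m) :
    ∑ α ∈ P.support, ‖coeff α P‖ ^ (2 * m / (m + 1) : ℝ) ≤
      (∑ k, sliceNorm P k) ^ (2 * m / (m + 1) : ℝ) := by
  have hm0 : (0 : ℝ) < m := mod_cast Nat.pos_of_ne_zero hm
  set S := ∑ k, sliceNorm P k
  have hS : 0 ≤ S := Finset.sum_nonneg fun k _ => sliceNorm_nonneg P k
  set W : (σ →₀ ℕ) → ℝ := fun α => ∏ k, sliceNorm P k ^ α k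
  have hW : ∀ α ∈ P.support, 0 < W α := fun α hα => prod_sliceNorm_pow_pos hα
  have hWsum : ∑ α ∈ P.support, W α ≤ S ^ m :=
    sum_prod_pow_le_sum_pow (fun α hα => (hP.degree_eq_sum_deg_support hα).symm)
      (sliceNorm_nonneg P)
  have hcWsum : ∑ α ∈ P.support, ‖coeff α P‖ ^ 2 * (W α)⁻¹ ^ (m : ℝ)⁻¹ ≤ S :=
    sum_sq_norm_coeff_mul_inv_prod_sliceNorm_rpow_le hm hP
  have hcW0 : 0 ≤ ∑ α ∈ P.support, ‖coeff α P‖ ^ 2 * (W α)⁻¹ ^ (m : ℝ)⁻¹ :=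
    Finset.sum_nonneg fun α hα => by
      have := hW α hα
      positivity
  calc ∑ α ∈ P.support, ‖coeff α P‖ ^ (2 * m / (m + 1) : ℝ)
      ≤ (∑ α ∈ P.support, ‖coeff α P‖ ^ 2 * (W α)⁻¹ ^ (m : ℝ)⁻¹) ^ (m / (m + 1) : ℝ) *
          (∑ α ∈ P.support, W α) ^ (1 / (m + 1) : ℝ) :=
        sum_rpow_le_rpow_mul_rpow _ hm0 (fun _ _ => norm_nonneg _) hW
    _ ≤ S ^ (m / (m + 1) : ℝ) * (S ^ m) ^ (1 / (m + 1) : ℝ) := by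
        gcongr
        · exact Real.rpow_nonneg (Finset.sum_nonneg fun α hα => (hW α hα).le) _
        · exact Finset.sum_nonneg fun α hα => (hW α hα).le
    _ = S ^ (2 * m / (m + 1) : ℝ) := by
        rw [← Real.rpow_natCast S m, ← Real.rpow_mul hS,
          ← Real.rpow_add_of_nonneg hS (by positivity) (by positivity)]
        congr 1
        ring

end Homogeneous

end Blei

section ProductCoefficients

open Finset.HasAntidiagonal (antidiagonal)

theorem card_antidiagonal_le_two_pow_degree {σ : Type*} [DecidableEq σ] (γ : σ →₀ ℕ) :
    (antidiagonal γ).card ≤ 2 ^ γ.degree := by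
  calc (antidiagonal γ).card
      = (γ.toMultiset.antidiagonal.map
          (Prod.map Multiset.toFinsupp Multiset.toFinsupp)).toFinset.card := by
        rw [← Multiset.toFinsupp_support]
        rfl
    _ ≤ γ.toMultiset.antidiagonal.card := by
        simpa only [Multiset.card_map] using Multiset.toFinset_card_le
          (γ.toMultiset.antidiagonal.map (Prod.map Multiset.toFinsupp Multiset.toFinsupp))
    _ = 2 ^ γ.degree := by
        rw [Multiset.card_antidiagonal, Finsupp.card_toMultiset]
        rfl

theorem sum_sum_antidiagonal_le_sum_product {M : Type*} [AddMonoid M]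
    [Finset.HasAntidiagonal M] {s t u : Finset M} {f : M × M → ℝ} (hf : ∀ x, 0 ≤ f x)
    (hf_support : ∀ x ∉ s ×ˢ t, f x = 0) :
    ∑ γ ∈ u, ∑ x ∈ antidiagonal γ, f x ≤ ∑ x ∈ s ×ˢ t, f x := by
  classical
  calc ∑ γ ∈ u, ∑ x ∈ antidiagonal γ, f x
      = ∑ γ ∈ u, ∑ x ∈ s ×ˢ t with x.1 + x.2 = γ, f x := by
        refine Finset.sum_congr rfl fun γ _ => Eq.symm <|
          Finset.sum_subset (fun x hx => ?_) fun x hx hx' => ?_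
        · exact Finset.HasAntidiagonal.mem_antidiagonal.2 (Finset.mem_filter.1 hx).2
        · exact hf_support x fun h =>
            hx' (Finset.mem_filter.2 ⟨h, Finset.HasAntidiagonal.mem_antidiagonal.1 hx⟩)
    _ ≤ ∑ x ∈ s ×ˢ t, f x :=
        Finset.sum_fiberwise_le_sum_of_sum_fiber_nonneg fun _ _ =>
          Finset.sum_nonneg fun x _ => hf x

theorem sum_sq_norm_coeff_mul_le {σ R : Type*} [NormedCommRing R] (P Q : MvPolynomial σ R) :
    ∑ γ ∈ (P * Q).support, ‖coeff γ (P * Q)‖ ^ 2 ≤ 2 ^ (P.totalDegree + Q.totalDegree) *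
      ((∑ α ∈ P.support, ‖coeff α P‖ ^ 2) * ∑ β ∈ Q.support, ‖coeff β Q‖ ^ 2) := by
  classical
  have hcard (γ) (hγ : γ ∈ (P * Q).support) :
      ((antidiagonal γ).card : ℝ) ≤ 2 ^ (P.totalDegree + Q.totalDegree) := by
    have hdeg : γ.degree ≤ P.totalDegree + Q.totalDegree :=
      (le_totalDegree hγ).trans (totalDegree_mul P Q)
    calc ((antidiagonal γ).card : ℝ) ≤ 2 ^ γ.degree :=
          mod_cast card_antidiagonal_le_two_pow_degree γ
      _ ≤ 2 ^ (P.totalDegree + Q.totalDegree) := by gcongr; norm_num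
  calc ∑ γ ∈ (P * Q).support, ‖coeff γ (P * Q)‖ ^ 2
      ≤ ∑ γ ∈ (P * Q).support, 2 ^ (P.totalDegree + Q.totalDegree) *
          ∑ x ∈ antidiagonal γ, ‖coeff x.1 P‖ ^ 2 * ‖coeff x.2 Q‖ ^ 2 := by
        refine Finset.sum_le_sum fun γ hγ => ?_
        calc ‖coeff γ (P * Q)‖ ^ 2
            ≤ (∑ x ∈ antidiagonal γ, ‖coeff x.1 P‖ * ‖coeff x.2 Q‖) ^ 2 := by
              rw [coeff_mul]
              gcongr
              exact norm_sum_le_of_le _ fun x _ => norm_mul_le _ _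
          _ ≤ (antidiagonal γ).card *
                ∑ x ∈ antidiagonal γ, (‖coeff x.1 P‖ * ‖coeff x.2 Q‖) ^ 2 :=
              sq_sum_le_card_mul_sum_sq
          _ ≤ _ := by
              simp only [mul_pow]
              gcongr
              exact hcard γ hγ
    _ ≤ 2 ^ (P.totalDegree + Q.totalDegree) *
          ∑ x ∈ P.support ×ˢ Q.support, ‖coeff x.1 P‖ ^ 2 * ‖coeff x.2 Q‖ ^ 2 := by
        rw [← Finset.mul_sum]
        gcongr
        refine sum_sum_antidiagonal_le_sum_product
          (f := fun x => ‖coeff x.1 P‖ ^ 2 * ‖coeff x.2 Q‖ ^ 2) (fun x => by positivity) ?_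
        intro x hx
        rw [Finset.mem_product, not_and_or, notMem_support_iff, notMem_support_iff] at hx
        rcases hx with hx | hx <;> simp [hx]
    _ = _ := by rw [Finset.sum_mul_sum, Finset.sum_product]

end ProductCoefficients

section Moments

open scoped BigOperators

theorem sum_sq_pow_three_le {ι : Type*} (s : Finset ι) {f : ι → ℝ} (hf : ∀ i ∈ s, 0 ≤ f i) :
    (∑ i ∈ s, f i ^ 2) ^ 3 ≤ (∑ i ∈ s, f i) ^ 2 * ∑ i ∈ s, f i ^ 4 := by
  have hsum_two : (∑ i ∈ s, f i ^ 2) ^ 2 ≤ (∑ i ∈ s, f i) * ∑ i ∈ s, f i ^ 3 :=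
    Finset.sum_sq_le_sum_mul_sum_of_sq_le_mul s hf (fun i hi => pow_nonneg (hf i hi) 3)
      fun i _ => le_of_eq (by ring)
  have hsum_three : (∑ i ∈ s, f i ^ 3) ^ 2 ≤ (∑ i ∈ s, f i ^ 2) * ∑ i ∈ s, f i ^ 4 :=
    Finset.sum_sq_le_sum_mul_sum_of_sq_le_mul s (fun i _ => sq_nonneg (f i))
      (fun i hi => pow_nonneg (hf i hi) 4) fun i _ => le_of_eq (by ring)
  have : 0 ≤ ∑ i ∈ s, f i := Finset.sum_nonneg hf
  have hsum_four : 0 ≤ ∑ i ∈ s, f i ^ 4 := Finset.sum_nonneg fun i hi => pow_nonneg (hf i hi) 4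
  rcases (Finset.sum_nonneg fun i (_ : i ∈ s) => sq_nonneg (f i)).eq_or_lt with hzero | hpos
  · rw [← hzero]
    simpa using mul_nonneg (sq_nonneg _) hsum_four
  refine le_of_mul_le_mul_left ?_ hpos
  calc (∑ i ∈ s, f i ^ 2) * (∑ i ∈ s, f i ^ 2) ^ 3 = ((∑ i ∈ s, f i ^ 2) ^ 2) ^ 2 := by ring
    _ ≤ ((∑ i ∈ s, f i) * ∑ i ∈ s, f i ^ 3) ^ 2 := by gcongr
    _ = (∑ i ∈ s, f i) ^ 2 * (∑ i ∈ s, f i ^ 3) ^ 2 := by ring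
    _ ≤ (∑ i ∈ s, f i) ^ 2 * ((∑ i ∈ s, f i ^ 2) * ∑ i ∈ s, f i ^ 4) := by gcongr
    _ = (∑ i ∈ s, f i ^ 2) * ((∑ i ∈ s, f i) ^ 2 * ∑ i ∈ s, f i ^ 4) := by ring

theorem expect_sq_pow_three_le {ι : Type*} [Fintype ι] {f : ι → ℝ} (hf : ∀ i, 0 ≤ f i) :
    (𝔼 i, f i ^ 2) ^ 3 ≤ (𝔼 i, f i) ^ 2 * 𝔼 i, f i ^ 4 := by
  simp only [Fintype.expect_eq_sum_div_card, div_pow, div_mul_div_comm, ← pow_succ]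
  gcongr
  exact sum_sq_pow_three_le Finset.univ fun i _ => hf i

end Moments

section Torus

open scoped BigOperators ComplexConjugate

theorem sum_stdAddChar_pow_mul_conj {N a b : ℕ} [NeZero N] (ha : a < N) (hb : b < N) :
    ∑ k : ZMod N, ZMod.stdAddChar k ^ a * conj (ZMod.stdAddChar k ^ b) =
      if a = b then (N : ℂ) else 0 := by
  have hchar (k : ZMod N) : ZMod.stdAddChar k ^ a * conj (ZMod.stdAddChar k ^ b) =
      ZMod.stdAddChar (k * ((a : ZMod N) - (b : ZMod N))) := by
    rw [← AddChar.map_nsmul_eq_pow, ← AddChar.map_nsmul_eq_pow, ← AddChar.map_neg_eq_conj,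
      ← AddChar.map_add_eq_mul]
    congr 1
    simp only [nsmul_eq_mul]
    ring
  simp only [hchar, AddChar.sum_mulShift _ (ZMod.isPrimitive_stdAddChar N), ZMod.card, sub_eq_zero,
    ZMod.natCast_eq_natCast_iff', Nat.mod_eq_of_lt ha, Nat.mod_eq_of_lt hb]
  push_cast
  rfl

variable {σ : Type*} {m N : ℕ} [NeZero N]

/-- The point of the torus `{z : |z i| = 1}` whose coordinates are the `N`-th roots of unity with
exponents `g`; averages over the torus are replaced by averages over these points. -/
noncomputable def torusPoint (g : σ → ZMod N) (i : σ) : ℂ := ZMod.stdAddChar (g i)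

theorem norm_torusPoint (g : σ → ZMod N) (i : σ) : ‖torusPoint g i‖ = 1 := by
  simp [torusPoint]

variable [Fintype σ] [DecidableEq σ]

theorem expect_torusPoint_prod_pow_mul_conj {α β : σ →₀ ℕ} (hα : ∀ i, α i < N)
    (hβ : ∀ i, β i < N) :
    𝔼 g : σ → ZMod N, (∏ i, torusPoint g i ^ α i) * conj (∏ i, torusPoint g i ^ β i) =
      if α = β then 1 else 0 := by
  have hsum : ∑ g : σ → ZMod N, (∏ i, torusPoint g i ^ α i) * conj (∏ i, torusPoint g i ^ β i) =
      ∏ i, if α i = β i then (N : ℂ) else 0 := by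
    simp only [torusPoint, map_prod, ← Finset.prod_mul_distrib,
      ← sum_stdAddChar_pow_mul_conj (hα _) (hβ _)]
    exact (Fintype.prod_sum fun i (k : ZMod N) =>
      ZMod.stdAddChar k ^ α i * conj (ZMod.stdAddChar k ^ β i)).symm
  rw [Fintype.expect_eq_sum_div_card, hsum]
  split_ifs with h
  · simp [h]
  · obtain ⟨i, hi⟩ := Finsupp.ne_iff.1 h
    rw [Finset.prod_eq_zero (Finset.mem_univ i) (if_neg hi), zero_div]

theorem expect_norm_eval_torusPoint_sq {P : MvPolynomial σ ℂ}
    (hP : ∀ α ∈ P.support, ∀ i, α i < N) :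
    𝔼 g : σ → ZMod N, ‖eval (torusPoint g) P‖ ^ 2 = ∑ α ∈ P.support, ‖coeff α P‖ ^ 2 := by
  have hsq (z : σ → ℂ) : ((‖eval z P‖ ^ 2 : ℝ) : ℂ) = ∑ α ∈ P.support, ∑ β ∈ P.support,
      coeff α P * conj (coeff β P) * ((∏ i, z i ^ α i) * conj (∏ i, z i ^ β i)) := by
    rw [Complex.ofReal_pow, ← Complex.mul_conj', eval_eq', map_sum, Finset.sum_mul_sum]
    simp only [map_mul, mul_mul_mul_comm]
  apply Complex.ofReal_injective
  calc ((𝔼 g : σ → ZMod N, ‖eval (torusPoint g) P‖ ^ 2 : ℝ) : ℂ)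
      = 𝔼 g : σ → ZMod N, ((‖eval (torusPoint g) P‖ ^ 2 : ℝ) : ℂ) := by
        simp
    _ = ∑ α ∈ P.support, ∑ β ∈ P.support, coeff α P * conj (coeff β P) *
          𝔼 g : σ → ZMod N, (∏ i, torusPoint g i ^ α i) * conj (∏ i, torusPoint g i ^ β i) := by
        simp only [hsq, Finset.expect_sum_comm, Finset.mul_expect]
    _ = ∑ α ∈ P.support, ∑ β ∈ P.support,
          coeff α P * conj (coeff β P) * if α = β then 1 else 0 :=
        Finset.sum_congr rfl fun α hα => Finset.sum_congr rfl fun β hβ => by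
          rw [expect_torusPoint_prod_pow_mul_conj (hP α hα) (hP β hβ)]
    _ = ((∑ α ∈ P.support, ‖coeff α P‖ ^ 2 : ℝ) : ℂ) := by
        simp +contextual [Complex.mul_conj']

theorem expect_norm_eval_torusPoint_pow_four_le {P : MvPolynomial σ ℂ} (hP : P.totalDegree ≤ m)
    (hN : 2 * m < N) :
    𝔼 g : σ → ZMod N, ‖eval (torusPoint g) P‖ ^ 4 ≤
      4 ^ m * (∑ α ∈ P.support, ‖coeff α P‖ ^ 2) ^ 2 := by
  have hdeg : ∀ γ ∈ (P * P).support, ∀ i, γ i < N := fun γ hγ i => by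
    have := γ.le_degree i
    have : γ.degree ≤ (P * P).totalDegree := le_totalDegree hγ
    have := totalDegree_mul P P
    omega
  calc 𝔼 g : σ → ZMod N, ‖eval (torusPoint g) P‖ ^ 4
      = 𝔼 g : σ → ZMod N, ‖eval (torusPoint g) (P * P)‖ ^ 2 := by
        refine Finset.expect_congr rfl fun g _ => ?_
        rw [map_mul, norm_mul]
        ring
    _ = ∑ γ ∈ (P * P).support, ‖coeff γ (P * P)‖ ^ 2 := expect_norm_eval_torusPoint_sq hdeg
    _ ≤ 2 ^ (P.totalDegree + P.totalDegree) * (∑ α ∈ P.support, ‖coeff α P‖ ^ 2) ^ 2 := by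
        rw [sq (∑ α ∈ P.support, _)]
        exact sum_sq_norm_coeff_mul_le P P
    _ ≤ 2 ^ (m + m) * (∑ α ∈ P.support, ‖coeff α P‖ ^ 2) ^ 2 := by
        gcongr
        norm_num
    _ = 4 ^ m * (∑ α ∈ P.support, ‖coeff α P‖ ^ 2) ^ 2 := by
        rw [← two_mul, pow_mul]
        norm_num

theorem sqrt_sum_sq_norm_coeff_le_expect {P : MvPolynomial σ ℂ} (hP : P.totalDegree ≤ m)
    (hN : 2 * m < N) :
    √(∑ α ∈ P.support, ‖coeff α P‖ ^ 2) ≤ 2 ^ m * 𝔼 g : σ → ZMod N, ‖eval (torusPoint g) P‖ := by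
  have hdeg : ∀ α ∈ P.support, ∀ i, α i < N := fun α hα i => by
    have := α.le_degree i
    have : α.degree ≤ P.totalDegree := le_totalDegree hα
    omega
  set L := ∑ α ∈ P.support, ‖coeff α P‖ ^ 2
  set A := 𝔼 g : σ → ZMod N, ‖eval (torusPoint g) P‖
  have : 0 ≤ A := Finset.expect_nonneg fun _ _ => norm_nonneg _
  have hL0 : 0 ≤ L := by positivity
  rcases hL0.eq_or_lt with hzero | hLpos
  · rw [← hzero, Real.sqrt_zero]
    positivity
  refine Real.sqrt_le_left (by positivity) |>.2 ?_
  refine le_of_mul_le_mul_right ?_ (pow_pos hLpos 2)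
  calc L * L ^ 2 = (𝔼 g : σ → ZMod N, ‖eval (torusPoint g) P‖ ^ 2) ^ 3 := by
        rw [expect_norm_eval_torusPoint_sq hdeg]
        ring
    _ ≤ A ^ 2 * 𝔼 g : σ → ZMod N, ‖eval (torusPoint g) P‖ ^ 4 :=
        expect_sq_pow_three_le fun _ => norm_nonneg _
    _ ≤ A ^ 2 * (4 ^ m * L ^ 2) := by
        gcongr
        exact expect_norm_eval_torusPoint_pow_four_le hP hN
    _ = (2 ^ m * A) ^ 2 * L ^ 2 := by
        rw [show (4 : ℝ) ^ m = (2 ^ m) ^ 2 by rw [← pow_mul, mul_comm, pow_mul]; norm_num]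
        ring

end Torus

section PolydiscBounds

open scoped ComplexConjugate

theorem eval_smul_of_isHomogeneous {σ R : Type*} [CommSemiring R] {m : ℕ}
    {P : MvPolynomial σ R} (hP : P.IsHomogeneous m) (r : R) (x : σ → R) :
    eval (r • x) P = r ^ m * eval x P := by
  rw [eval_eq, eval_eq, Finset.mul_sum]
  refine Finset.sum_congr rfl fun α hα => ?_
  simp only [Pi.smul_apply, smul_eq_mul, mul_pow, Finset.prod_mul_distrib,
    Finset.prod_pow_eq_pow_sum, ← hP.degree_eq_sum_deg_support hα]
  exact mul_left_comm _ _ _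

theorem hasDerivAt_eval_add_mul {σ : Type*} [Fintype σ] (P : MvPolynomial σ ℂ) (z v : σ → ℂ) :
    HasDerivAt (fun t : ℂ => eval (fun i => z i + t * v i) P)
      (∑ k, v k * eval z (pderiv k P)) 0 := by
  induction P using MvPolynomial.induction_on with
  | C a => simpa using hasDerivAt_const (0 : ℂ) a
  | add P Q hP hQ =>
    simp only [map_add, mul_add, Finset.sum_add_distrib]
    exact hP.add hQ
  | mul_X P i hP =>
    classical
    have hX : HasDerivAt (fun t : ℂ => z i + t * v i) (v i) 0 := by
      simpa using ((hasDerivAt_id (0 : ℂ)).mul_const (v i)).const_add (z i)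
    simp only [map_mul, eval_X]
    refine (hP.fun_mul hX).congr_deriv ?_
    simp [pderiv_X, Pi.single_apply, mul_add, Finset.sum_add_distrib, Finset.mul_sum,
      apply_ite, mul_comm, mul_left_comm, add_comm]

theorem differentiable_eval_comp {σ : Type*} (P : MvPolynomial σ ℂ) {f : ℂ → σ → ℂ}
    (hf : ∀ i, Differentiable ℂ fun t => f t i) : Differentiable ℂ fun t => eval (f t) P := by
  simp only [eval_eq]
  fun_prop

variable {σ : Type*} {m : ℕ} {P : MvPolynomial σ ℂ} {M : ℝ}

theorem norm_eval_add_mul_conj_le (hP : P.IsHomogeneous m)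
    (hM : ∀ x : σ → ℝ, (∀ i, |x i| ≤ 1) → ‖eval (fun i => (x i : ℂ)) P‖ ≤ M)
    {z : σ → ℂ} (hz : ∀ i, ‖z i‖ ≤ 1) {t : ℂ} (ht : ‖t‖ = 1) :
    ‖eval (fun i => z i + t * conj (z i)) P‖ ≤ 2 ^ m * M := by
  obtain ⟨v, rfl⟩ : ∃ v : ℂ, v ^ 2 = t := IsAlgClosed.exists_pow_nat_eq t two_pos
  have hv : ‖v‖ = 1 := by
    rwa [norm_pow, pow_eq_one_iff_of_nonneg (norm_nonneg v) two_ne_zero] at ht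
  have hrotate : (fun i => z i + v ^ 2 * conj (z i)) =
      (2 * v) • fun i => (((conj v * z i).re : ℝ) : ℂ) := by
    ext i
    have hvv : v * conj v = 1 := by rw [Complex.mul_conj', hv]; simp
    rw [Pi.smul_apply, smul_eq_mul, Complex.re_eq_add_conj, map_mul, Complex.conj_conj]
    linear_combination (-z i) * hvv
  rw [hrotate, eval_smul_of_isHomogeneous hP, norm_mul, norm_pow, norm_mul, hv, mul_one,
    Complex.norm_ofNat]
  gcongr
  refine hM _ fun i => (Complex.abs_re_le_norm _).trans ?_
  rw [norm_mul, Complex.norm_conj, hv, one_mul]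
  exact hz i

-- The maximum principle for `t ↦ P (z + t * conj z)`.
theorem norm_eval_le_two_pow_mul (hP : P.IsHomogeneous m)
    (hM : ∀ x : σ → ℝ, (∀ i, |x i| ≤ 1) → ‖eval (fun i => (x i : ℂ)) P‖ ≤ M)
    {z : σ → ℂ} (hz : ∀ i, ‖z i‖ ≤ 1) : ‖eval z P‖ ≤ 2 ^ m * M := by
  have hdiff : Differentiable ℂ fun t : ℂ => eval (fun i => z i + t * conj (z i)) P :=
    differentiable_eval_comp P fun i => by fun_prop
  have hsphere : ∀ t ∈ frontier (Metric.ball (0 : ℂ) 1),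
      ‖eval (fun i => z i + t * conj (z i)) P‖ ≤ 2 ^ m * M := fun t ht =>
    norm_eval_add_mul_conj_le hP hM hz <| by
      rwa [frontier_ball _ one_ne_zero, mem_sphere_zero_iff_norm] at ht
  simpa using Complex.norm_le_of_forall_mem_frontier_norm_le Metric.isBounded_ball
    hdiff.diffContOnCl hsphere (subset_closure (Metric.mem_ball_self one_pos))

theorem norm_eval_le_four_pow_mul (hP : P.IsHomogeneous m)
    (hM : ∀ x : σ → ℝ, (∀ i, |x i| ≤ 1) → ‖eval (fun i => (x i : ℂ)) P‖ ≤ M)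
    {z : σ → ℂ} (hz : ∀ i, ‖z i‖ ≤ 2) : ‖eval z P‖ ≤ 4 ^ m * M := by
  have hhalf (i : σ) : ‖((2 : ℂ)⁻¹ • z) i‖ ≤ 1 := by
    rw [Pi.smul_apply, norm_smul, norm_inv, Complex.norm_ofNat, inv_mul_le_one₀ two_pos]
    exact hz i
  calc ‖eval z P‖ = ‖eval ((2 : ℂ) • (2 : ℂ)⁻¹ • z) P‖ := by
        rw [smul_inv_smul₀ two_ne_zero]
    _ = 2 ^ m * ‖eval ((2 : ℂ)⁻¹ • z) P‖ := by
        rw [eval_smul_of_isHomogeneous hP, norm_mul, norm_pow, Complex.norm_ofNat]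
    _ ≤ 2 ^ m * (2 ^ m * M) := by
        gcongr
        exact norm_eval_le_two_pow_mul hP hM hhalf
    _ = 4 ^ m * M := by
        rw [← mul_assoc, ← mul_pow]
        norm_num

-- Cauchy's estimate in a direction `v` whose phases align the partial derivatives.
theorem sum_norm_eval_pderiv_le_of_forall_norm_eval_le [Fintype σ] {z : σ → ℂ} (hz : ∀ i, ‖z i‖ ≤ 1)
    (hM : ∀ w : σ → ℂ, (∀ i, ‖w i‖ ≤ 2) → ‖eval w P‖ ≤ M) :
    ∑ k, ‖eval z (pderiv k P)‖ ≤ M := by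
  choose v hv_norm hv_mul using fun k => Complex.exists_norm_eq_mul_self (eval z (pderiv k P))
  have hdiff : Differentiable ℂ fun t : ℂ => eval (fun i => z i + t * v i) P :=
    differentiable_eval_comp P fun i => by fun_prop
  have hsphere : ∀ t ∈ Metric.sphere (0 : ℂ) 1, ‖eval (fun i => z i + t * v i) P‖ ≤ M := by
    intro t ht
    rw [mem_sphere_zero_iff_norm] at ht
    refine hM _ fun i => ?_
    calc ‖z i + t * v i‖ ≤ ‖z i‖ + ‖t‖ * ‖v i‖ := (norm_add_le _ _).trans_eq (by rw [norm_mul])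
      _ ≤ 1 + 1 * 1 := by
        rw [ht, hv_norm]
        gcongr
        exact hz i
      _ = 2 := by norm_num
  have hcauchy := Complex.norm_deriv_le_of_forall_mem_sphere_norm_le one_pos
    hdiff.diffContOnCl hsphere
  rw [(hasDerivAt_eval_add_mul P z v).deriv, div_one] at hcauchy
  simp only [← hv_mul] at hcauchy
  rw [← Complex.ofReal_sum, Complex.norm_real] at hcauchy
  exact (le_abs_self _).trans hcauchy

end PolydiscBounds

section BohnenblustHille

open scoped BigOperators

variable {σ : Type*} {m : ℕ}

theorem coeff_X_mul_pderiv {R : Type*} [CommSemiring R] (k : σ) (P : MvPolynomial σ R)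
    (α : σ →₀ ℕ) : coeff α (X k * pderiv k P) = α k * coeff α P := by
  classical
  rcases eq_or_ne (α k) 0 with hk | hk
  · rw [coeff_X_mul', if_neg (Finsupp.notMem_support_iff.2 hk), hk, Nat.cast_zero, zero_mul]
  · obtain ⟨β, rfl⟩ := exists_add_of_le (Finsupp.single_le_iff.2 (Nat.one_le_iff_ne_zero.2 hk))
    rw [coeff_X_mul, coeff_pderiv, add_comm β, mul_comm]
    simp [add_comm]

theorem support_X_mul_pderiv_subset {R : Type*} [CommSemiring R] (k : σ) (P : MvPolynomial σ R) :
    (X k * pderiv k P).support ⊆ P.support := fun α hα => by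
  rw [mem_support_iff, coeff_X_mul_pderiv] at hα
  exact mem_support_iff.2 (right_ne_zero_of_mul hα)

theorem sliceNorm_le_sqrt_sum_sq_norm_coeff_X_mul_pderiv (P : MvPolynomial σ ℂ) (k : σ) :
    sliceNorm P k ≤
      √(∑ α ∈ (X k * pderiv k P).support, ‖coeff α (X k * pderiv k P)‖ ^ 2) := by
  apply Real.sqrt_le_sqrt
  rw [Finset.sum_subset (support_X_mul_pderiv_subset k P) fun α _ hα => by
    rw [notMem_support_iff.1 hα, norm_zero, sq, zero_mul]]
  refine Finset.sum_le_sum fun α _ => ?_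
  rw [coeff_X_mul_pderiv, norm_mul, Complex.norm_natCast, mul_pow]
  gcongr
  exact_mod_cast Nat.le_self_pow two_ne_zero (α k)

theorem sliceNorm_le_two_pow_mul_expect [Fintype σ] [DecidableEq σ]
    {P : MvPolynomial σ ℂ} (hP : P.totalDegree ≤ m) {N : ℕ} [NeZero N] (hN : 2 * m < N) (k : σ) :
    sliceNorm P k ≤ 2 ^ m * 𝔼 g : σ → ZMod N, ‖eval (torusPoint g) (pderiv k P)‖ := by
  have hdeg : (X k * pderiv k P).totalDegree ≤ m :=
    (totalDegree_le_of_support_subset (support_X_mul_pderiv_subset k P)).trans hP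
  calc sliceNorm P k
      ≤ √(∑ α ∈ (X k * pderiv k P).support, ‖coeff α (X k * pderiv k P)‖ ^ 2) :=
        sliceNorm_le_sqrt_sum_sq_norm_coeff_X_mul_pderiv P k
    _ ≤ 2 ^ m * 𝔼 g : σ → ZMod N, ‖eval (torusPoint g) (X k * pderiv k P)‖ :=
        sqrt_sum_sq_norm_coeff_le_expect hdeg hN
    _ = 2 ^ m * 𝔼 g : σ → ZMod N, ‖eval (torusPoint g) (pderiv k P)‖ := by
        simp only [map_mul, eval_X, norm_mul, norm_torusPoint, one_mul]

theorem sum_sliceNorm_le_eight_pow_mul [Fintype σ] {P : MvPolynomial σ ℂ}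
    (hP : P.IsHomogeneous m) {M : ℝ}
    (hM : ∀ x : σ → ℝ, (∀ i, |x i| ≤ 1) → ‖eval (fun i => (x i : ℂ)) P‖ ≤ M) :
    ∑ k, sliceNorm P k ≤ 8 ^ m * M := by
  classical
  calc ∑ k, sliceNorm P k
      ≤ ∑ k, 2 ^ m * 𝔼 g : σ → ZMod (2 * m + 1), ‖eval (torusPoint g) (pderiv k P)‖ :=
        Finset.sum_le_sum fun k _ =>
          sliceNorm_le_two_pow_mul_expect hP.totalDegree_le (Nat.lt_succ_self _) k
    _ = 2 ^ m * 𝔼 g : σ → ZMod (2 * m + 1), ∑ k, ‖eval (torusPoint g) (pderiv k P)‖ := by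
        rw [← Finset.mul_sum, Finset.expect_sum_comm]
    _ ≤ 2 ^ m * (4 ^ m * M) := by
        gcongr
        refine Finset.expect_le Finset.univ_nonempty fun g _ => ?_
        exact sum_norm_eval_pderiv_le_of_forall_norm_eval_le (fun i => (norm_torusPoint g i).le)
          fun w hw => norm_eval_le_four_pow_mul hP hM hw
    _ = 8 ^ m * M := by
        rw [← mul_assoc, ← mul_pow]
        norm_num

theorem sum_norm_coeff_rpow_le_of_forall_norm_eval_le [Finite σ] (hm : m ≠ 0) {P : MvPolynomial σ ℂ}
    (hP : P.IsHomogeneous m) {M : ℝ}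
    (hM : ∀ x : σ → ℝ, (∀ i, |x i| ≤ 1) → ‖eval (fun i => (x i : ℂ)) P‖ ≤ M) :
    (∑ α ∈ P.support, ‖coeff α P‖ ^ (2 * m / (m + 1) : ℝ)) ^ (1 / (2 * m / (m + 1)) : ℝ) ≤
      8 ^ m * M := by
  cases nonempty_fintype σ
  have : (0 : ℝ) < m := mod_cast Nat.pos_of_ne_zero hm
  have hS : 0 ≤ ∑ k, sliceNorm P k := Finset.sum_nonneg fun k _ => sliceNorm_nonneg P k
  calc (∑ α ∈ P.support, ‖coeff α P‖ ^ (2 * m / (m + 1) : ℝ)) ^ (1 / (2 * m / (m + 1)) : ℝ)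
      ≤ ((∑ k, sliceNorm P k) ^ (2 * m / (m + 1) : ℝ)) ^ (1 / (2 * m / (m + 1)) : ℝ) := by
        gcongr
        exact sum_norm_coeff_rpow_le_sum_sliceNorm_rpow hm hP
    _ = ∑ k, sliceNorm P k := by
        rw [← Real.rpow_mul hS, mul_one_div_cancel (by positivity), Real.rpow_one]
    _ ≤ 8 ^ m * M := sum_sliceNorm_le_eight_pow_mul hP hM

end BohnenblustHille

section CubeNorms

theorem bddAbove_abs_eval_cube {n : ℕ} (P : MvPolynomial (Fin n) ℝ) :
    BddAbove {y : ℝ | ∃ x : Fin n → ℝ, (∀ i, |x i| ≤ 1) ∧ y = |eval x P|} := by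
  have hcube : IsCompact (Set.univ.pi fun _ : Fin n => Set.Icc (-1 : ℝ) 1) :=
    isCompact_univ_pi fun _ => isCompact_Icc
  refine (hcube.bddAbove_image P.continuous_eval.abs.continuousOn).mono ?_
  rintro _ ⟨x, hx, rfl⟩
  exact ⟨x, fun i _ => abs_le.1 (hx i), rfl⟩

theorem abs_eval_le_supNorm {n : ℕ} (P : MvPolynomial (Fin n) ℝ) {x : Fin n → ℝ}
    (hx : ∀ i, |x i| ≤ 1) : |eval x P| ≤ supNorm P :=
  le_csSup (bddAbove_abs_eval_cube P) ⟨x, hx, rfl⟩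

theorem supNorm_le {n : ℕ} {P : MvPolynomial (Fin n) ℝ} {C : ℝ}
    (h : ∀ x : Fin n → ℝ, (∀ i, |x i| ≤ 1) → |eval x P| ≤ C) : supNorm P ≤ C :=
  csSup_le ⟨_, 0, by simp, rfl⟩ <| by
    rintro y ⟨x, hx, rfl⟩
    exact h x hx

theorem lpNorm_le_eight_pow_mul_supNorm {n m : ℕ} (hm : m ≠ 0) {P : MvPolynomial (Fin n) ℝ}
    (hP : P.IsHomogeneous m) : lpNorm (2 * m / (m + 1)) P ≤ 8 ^ m * supNorm P := by
  have hinj : Function.Injective Complex.ofRealHom := Complex.ofReal_injective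
  have heval (x : Fin n → ℝ) : eval (fun i => (x i : ℂ)) (map Complex.ofRealHom P) = eval x P := by
    rw [eval_map]
    exact (eval₂_comp_left Complex.ofRealHom (RingHom.id ℝ) x P).symm
  have hBH := sum_norm_coeff_rpow_le_of_forall_norm_eval_le hm (hP.map Complex.ofRealHom)
    (M := supNorm P) fun x hx => by
      rw [heval, Complex.norm_real]
      exact abs_eval_le_supNorm P hx
  simpa only [lpNorm, support_map_of_injective P hinj, coeff_map, Complex.ofRealHom_eq_coe,
    Complex.norm_real, Real.norm_eq_abs] using hBH

end CubeNorms

section Vandermonde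

theorem det_eval_eq_det_vandermonde_mul_prod_coeff {R : Type*} [CommRing R] {n : ℕ}
    (v : Fin n → R) (p : Fin n → Polynomial R) (hp : ∀ i, (p i).natDegree ≤ i) :
    (Matrix.of fun i j => (p j).eval (v i)).det =
      (Matrix.vandermonde v).det * ∏ i, (p i).coeff i := by
  rw [Matrix.eval_matrixOfPolynomials_eq_vandermonde_mul_matrixOfPolynomials v p hp,
    Matrix.det_mul,
    Matrix.det_of_isUpperTriangular (Matrix.matrixOfPolynomials_blockTriangular p hp)]
  rfl

theorem abs_det_eval_chebyshevT_le_factorial {n : ℕ} {x : Fin n → ℝ} (hx : ∀ i, |x i| ≤ 1) :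
    |(Matrix.of fun i j : Fin n => (Polynomial.Chebyshev.T ℝ (j : ℕ)).eval (x i)).det| ≤
      n.factorial := by
  have hdet := Matrix.det_le
    (A := Matrix.of fun i j : Fin n => (Polynomial.Chebyshev.T ℝ (j : ℕ)).eval (x i))
    (abv := AbsoluteValue.abs) fun i j =>
      Polynomial.Chebyshev.abs_eval_T_real_le_one (j : ℕ) (hx i)
  simpa using hdet

theorem two_pow_choose_two_le_prod_mul (n : ℕ) :
    (2 : ℝ) ^ n.choose 2 ≤ (∏ k : Fin n, 2 ^ ((k : ℕ) - 1)) * 2 ^ n := by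
  calc (2 : ℝ) ^ n.choose 2 = ∏ k : Fin n, 2 ^ (k : ℕ) := by
        rw [Finset.prod_pow_eq_pow_sum, Fin.sum_univ_eq_sum_range (fun i => i),
          Finset.sum_range_id, Nat.choose_two_right]
    _ ≤ ∏ k : Fin n, 2 ^ ((k : ℕ) - 1) * 2 := by
        gcongr with k
        rw [← pow_succ]
        exact pow_le_pow_right₀ one_le_two (by omega)
    _ = (∏ k : Fin n, 2 ^ ((k : ℕ) - 1)) * 2 ^ n := by
        rw [Finset.prod_mul_distrib, Finset.prod_const, Finset.card_univ, Fintype.card_fin]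

theorem abs_det_vandermonde_mul_two_pow_le {n : ℕ} {x : Fin n → ℝ} (hx : ∀ i, |x i| ≤ 1) :
    |(Matrix.vandermonde x).det| * 2 ^ n.choose 2 ≤ n.factorial * 2 ^ n := by
  have hcoeff (k : ℕ) : (Polynomial.Chebyshev.T ℝ k).coeff k = 2 ^ (k - 1) := by
    have hlead := Polynomial.Chebyshev.leadingCoeff_T ℝ k
    rwa [Polynomial.leadingCoeff, Polynomial.Chebyshev.natDegree_T, Int.natAbs_natCast] at hlead
  have hdet := det_eval_eq_det_vandermonde_mul_prod_coeff x
    (fun k => Polynomial.Chebyshev.T ℝ (k : ℕ)) fun k => by simp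
  simp only [hcoeff] at hdet
  calc |(Matrix.vandermonde x).det| * 2 ^ n.choose 2
      ≤ |(Matrix.vandermonde x).det| * ((∏ k : Fin n, 2 ^ ((k : ℕ) - 1)) * 2 ^ n) := by
        gcongr
        exact two_pow_choose_two_le_prod_mul n
    _ = |(Matrix.of fun i j : Fin n => (Polynomial.Chebyshev.T ℝ (j : ℕ)).eval (x i)).det| *
          2 ^ n := by
        rw [hdet, abs_mul, abs_of_nonneg (by positivity : (0 : ℝ) ≤ ∏ k : Fin n, _), mul_assoc]
    _ ≤ n.factorial * 2 ^ n := by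
        gcongr
        exact abs_det_eval_chebyshevT_le_factorial hx

/-- The Vandermonde determinant `∏ i < j, (X j - X i)` as a polynomial in `n` variables; it is
defined over any commutative ring, so that its real coefficients are visibly integers. -/
noncomputable def vandermondePolynomial (R : Type*) [CommRing R] (n : ℕ) : MvPolynomial (Fin n) R :=
  (Matrix.vandermonde X).det

theorem isHomogeneous_vandermondePolynomial (R : Type*) [CommRing R] (n : ℕ) :
    (vandermondePolynomial R n).IsHomogeneous (n.choose 2) := by
  have hcard : n.choose 2 = ∑ i : Fin n, ∑ _j ∈ Finset.Ioi i, 1 := by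
    simp only [Finset.sum_const, Fin.card_Ioi, smul_eq_mul, mul_one]
    rw [Fin.sum_univ_eq_sum_range (fun i => n - 1 - i), Finset.sum_range_reflect (fun i => i),
      Finset.sum_range_id, Nat.choose_two_right]
  rw [vandermondePolynomial, Matrix.det_vandermonde, hcard]
  exact IsHomogeneous.prod _ _ _ fun i _ => IsHomogeneous.prod _ _ _ fun j _ =>
    (isHomogeneous_X _ _).sub (isHomogeneous_X _ _)

theorem vandermondePolynomial_ne_zero (R : Type*) [CommRing R] [IsDomain R] (n : ℕ) :
    vandermondePolynomial R n ≠ 0 :=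
  Matrix.det_vandermonde_ne_zero_iff.2 (X_injective (R := R))

theorem map_vandermondePolynomial {R S : Type*} [CommRing R] [CommRing S] (f : R →+* S) (n : ℕ) :
    map f (vandermondePolynomial R n) = vandermondePolynomial S n := by
  simp [vandermondePolynomial, Matrix.det_vandermonde]

theorem eval_vandermondePolynomial {R : Type*} [CommRing R] {n : ℕ} (x : Fin n → R) :
    eval x (vandermondePolynomial R n) = (Matrix.vandermonde x).det := by
  simp [vandermondePolynomial, Matrix.det_vandermonde]

theorem one_le_lpNorm_map_intCast {n : ℕ} {Q : MvPolynomial (Fin n) ℤ} (hQ : Q ≠ 0) {p : ℝ}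
    (hp : 0 < p) : 1 ≤ lpNorm p (map (Int.castRingHom ℝ) Q) := by
  obtain ⟨α, hα⟩ := support_nonempty.2 hQ
  have hcoeff : 1 ≤ |coeff α (map (Int.castRingHom ℝ) Q)| := by
    rw [coeff_map, eq_intCast]
    exact_mod_cast Int.one_le_abs (mem_support_iff.1 hα)
  have hmem : α ∈ (map (Int.castRingHom ℝ) Q).support := by
    rwa [support_map_of_injective _ (RingHom.injective_int (Int.castRingHom ℝ))]
  refine Real.one_le_rpow ?_ (by positivity)
  calc 1 ≤ |coeff α (map (Int.castRingHom ℝ) Q)| ^ p := Real.one_le_rpow hcoeff hp.le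
    _ ≤ ∑ β ∈ (map (Int.castRingHom ℝ) Q).support, |coeff β (map (Int.castRingHom ℝ) Q)| ^ p :=
      Finset.single_le_sum (f := fun β => |coeff β (map (Int.castRingHom ℝ) Q)| ^ p)
        (fun _ _ => by positivity) hmem

theorem supNorm_vandermondePolynomial_le (n : ℕ) :
    supNorm (vandermondePolynomial ℝ n) ≤ n.factorial * 2 ^ n / 2 ^ n.choose 2 :=
  supNorm_le fun x hx => by
    rw [eval_vandermondePolynomial, le_div_iff₀ (by positivity)]
    exact abs_det_vandermonde_mul_two_pow_le hx

end Vandermonde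

section BHconst

theorem BHconst_nonneg (m : ℕ) : 0 ≤ BHconst m :=
  Real.sInf_nonneg fun _ h => h.1.le

theorem BHconst_le_eight_pow {m : ℕ} (hm : m ≠ 0) : BHconst m ≤ 8 ^ m :=
  csInf_le ⟨0, fun _ h => h.1.le⟩
    ⟨by positivity, fun _ _ hP => lpNorm_le_eight_pow_mul_supNorm hm hP⟩

theorem two_pow_div_le_BHconst_choose_two {n : ℕ} (hn : 2 ≤ n) :
    2 ^ n.choose 2 / (n.factorial * 2 ^ n) ≤ BHconst (n.choose 2) := by
  have hm : 0 < n.choose 2 := Nat.choose_pos hn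
  refine le_csInf
    ⟨8 ^ n.choose 2, by positivity, fun _ _ hP => lpNorm_le_eight_pow_mul_supNorm hm.ne' hP⟩ ?_
  rintro D ⟨hD, hBH⟩
  have hp : (0 : ℝ) < 2 * (n.choose 2 : ℕ) / ((n.choose 2 : ℕ) + 1) := by positivity
  have hone : (1 : ℝ) ≤ D * (n.factorial * 2 ^ n / 2 ^ n.choose 2) :=
    calc 1 ≤ lpNorm _ (map (Int.castRingHom ℝ) (vandermondePolynomial ℤ n)) :=
          one_le_lpNorm_map_intCast (vandermondePolynomial_ne_zero ℤ n) hp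
      _ = lpNorm _ (vandermondePolynomial ℝ n) := by rw [map_vandermondePolynomial]
      _ ≤ D * supNorm (vandermondePolynomial ℝ n) :=
          hBH n _ (isHomogeneous_vandermondePolynomial ℝ n)
      _ ≤ D * (n.factorial * 2 ^ n / 2 ^ n.choose 2) := by
          gcongr
          exact supNorm_vandermondePolynomial_le n
  rwa [← mul_div_assoc, one_le_div (by positivity), ← div_le_iff₀ (by positivity)] at hone

theorem isBoundedUnder_BHconst_rpow_inv :
    IsBoundedUnder (· ≤ ·) atTop fun m : ℕ => BHconst m ^ ((m : ℝ)⁻¹) := by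
  refine isBoundedUnder_of_eventually_le (a := 8) ?_
  filter_upwards [eventually_ne_atTop 0] with m hm
  calc BHconst m ^ ((m : ℝ)⁻¹) ≤ ((8 : ℝ) ^ m) ^ ((m : ℝ)⁻¹) :=
        Real.rpow_le_rpow (BHconst_nonneg m) (BHconst_le_eight_pow hm) (by positivity)
    _ = 8 := Real.pow_rpow_inv_natCast (by norm_num) hm

theorem two_div_rpow_le_BHconst_choose_two_rpow_inv {n : ℕ} (hn : 2 ≤ n) :
    2 / (2 * n : ℝ) ^ (2 / (n - 1) : ℝ) ≤ BHconst (n.choose 2) ^ ((n.choose 2 : ℝ)⁻¹) := by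
  have hm : n.choose 2 ≠ 0 := (Nat.choose_pos hn).ne'
  have hn1 : (0 : ℝ) < n - 1 := by
    have : (2 : ℝ) ≤ n := mod_cast hn
    linarith
  have hexp : (n : ℝ) * (n.choose 2 : ℝ)⁻¹ = 2 / (n - 1) := by
    have : (0 : ℝ) < n := by positivity
    rw [Nat.cast_choose_two]
    field_simp
  have hfact : (n.factorial * 2 ^ n : ℝ) ≤ (2 * n) ^ n := by
    rw [mul_pow, mul_comm]
    gcongr
    exact_mod_cast n.factorial_le_pow
  calc 2 / (2 * n : ℝ) ^ (2 / (n - 1) : ℝ)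
      = (2 ^ n.choose 2 / (2 * n) ^ n : ℝ) ^ ((n.choose 2 : ℝ)⁻¹) := by
        rw [Real.div_rpow (by positivity) (by positivity), Real.pow_rpow_inv_natCast two_pos.le hm,
          ← Real.rpow_natCast (2 * n : ℝ) n, ← Real.rpow_mul (by positivity), hexp]
    _ ≤ (2 ^ n.choose 2 / (n.factorial * 2 ^ n)) ^ ((n.choose 2 : ℝ)⁻¹) := by gcongr
    _ ≤ BHconst (n.choose 2) ^ ((n.choose 2 : ℝ)⁻¹) := by
        gcongr
        exact two_pow_div_le_BHconst_choose_two hn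

theorem tendsto_two_div_two_mul_rpow :
    Tendsto (fun n : ℕ => 2 / (2 * n : ℝ) ^ (2 / (n - 1) : ℝ)) atTop (nhds 2) := by
  have hrpow : Tendsto (fun x : ℝ => x ^ (2 / (1 / 2 * x + -1))) atTop (nhds 1) :=
    tendsto_rpow_div_mul_add 2 (1 / 2) (-1) (by norm_num)
  have hlin : Tendsto (fun n : ℕ => 2 * (n : ℝ)) atTop atTop :=
    tendsto_natCast_atTop_atTop.const_mul_atTop two_pos
  have hdiv := (tendsto_const_nhds (x := (2 : ℝ))).div (hrpow.comp hlin) one_ne_zero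
  rw [div_one] at hdiv
  refine hdiv.congr fun n => ?_
  rw [Pi.div_apply, Function.comp_apply, one_div, inv_mul_cancel_left₀ two_ne_zero,
    ← sub_eq_add_neg]

theorem tendsto_choose_two_atTop : Tendsto (fun n : ℕ => n.choose 2) atTop atTop := by
  refine tendsto_atTop_mono' _ ?_ (tendsto_sub_atTop_nat 1)
  filter_upwards [eventually_ge_atTop 2] with n hn
  rw [Nat.choose_two_right, Nat.le_div_iff_mul_le two_pos, mul_comm]
  exact Nat.mul_le_mul_right _ hn

end BHconst

/-- The real polynomial Bohnenblust–Hille constants satisfy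
`limsup_{m→∞} D_{ℝ,m}^{1/m} ≥ 2`. -/
theorem real_BH_limsup_ge_two :
    2 ≤ limsup (fun m : ℕ => BHconst m ^ ((m : ℝ)⁻¹)) atTop := by
  refine le_of_forall_lt_imp_le_of_dense fun a ha => ?_
  have hfreq : ∃ᶠ m in atTop, a ≤ BHconst m ^ ((m : ℝ)⁻¹) := by
    refine tendsto_choose_two_atTop.frequently (Eventually.frequently ?_)
    filter_upwards [tendsto_two_div_two_mul_rpow.eventually_const_lt ha, eventually_ge_atTop 2]
      with n hlt hn
    exact hlt.le.trans (two_div_rpow_le_BHconst_choose_two_rpow_inv hn)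
  exact le_limsup_of_frequently_le hfreq isBoundedUnder_BHconst_rpow_inv
end

section
/- For every even positive integer m, the m-homogeneous real polynomial R_m(x_1,…,x_m) = ∏_{j=1}^{m/2} (x_{2j−1}² − x_{2j}² + x_{2j−1}x_{2j}) in m variables satisfies ‖R_m‖ = (5/4)^{m/2}, where ‖R_m‖ = sup{|R_m(x)| : x ∈ [−1,1]^m}. -/
open MvPolynomial Filter

/-- For an even positive integer `m = 2k`, the polynomial
`R_m(x_1,…,x_m) = ∏_{j=1}^{m/2} (x_{2j-1}² - x_{2j}² + x_{2j-1} x_{2j})`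
in `m = 2k` variables. -/
noncomputable def Rpoly (k : ℕ) : MvPolynomial (Fin (2 * k)) ℝ :=
  ∏ j : Fin k,
    (X (⟨2 * j.1, by have := j.2; omega⟩ : Fin (2 * k)) ^ 2
      - X (⟨2 * j.1 + 1, by have := j.2; omega⟩ : Fin (2 * k)) ^ 2
      + X (⟨2 * j.1, by have := j.2; omega⟩ : Fin (2 * k))
        * X (⟨2 * j.1 + 1, by have := j.2; omega⟩ : Fin (2 * k)))

/-!
The sup norm over the cube is multiplicative on products of polynomials in pairwise disjoint sets
of variables, because maximizers of the factors can be glued together. As `R_m` is a product of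
`m / 2` copies of `x² - y² + x y` in disjoint pairs of variables, only this quadratic form matters,
and completing the square in either variable shows that its norm is `5 / 4`.
-/

theorem isGreatest_supNorm {n : ℕ} (P : MvPolynomial (Fin n) ℝ) :
    IsGreatest {y : ℝ | ∃ x : Fin n → ℝ, (∀ i, |x i| ≤ 1) ∧ y = |eval x P|} (supNorm P) := by
  have image_eq : {y : ℝ | ∃ x : Fin n → ℝ, (∀ i, |x i| ≤ 1) ∧ y = |eval x P|} =
      (fun x ↦ |eval x P|) '' Metric.closedBall (0 : Fin n → ℝ) 1 := by
    ext y
    simp only [Set.mem_ofPred_eq, Set.mem_image, mem_closedBall_zero_iff,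
      pi_norm_le_iff_of_nonneg zero_le_one, Real.norm_eq_abs, eq_comm]
  rw [supNorm, image_eq]
  exact ((isCompact_closedBall _ _).image P.continuous_eval.abs).isGreatest_sSup
    ((Metric.nonempty_closedBall.2 zero_le_one).image _)

theorem exists_abs_eval_eq_supNorm {n : ℕ} (P : MvPolynomial (Fin n) ℝ) :
    ∃ x : Fin n → ℝ, (∀ i, |x i| ≤ 1) ∧ |eval x P| = supNorm P :=
  let ⟨x, hx, h⟩ := (isGreatest_supNorm P).1
  ⟨x, hx, h.symm⟩

theorem supNorm_eq_of_forall_le_of_exists {n : ℕ} {P : MvPolynomial (Fin n) ℝ} {M : ℝ}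
    (hle : ∀ x : Fin n → ℝ, (∀ i, |x i| ≤ 1) → |eval x P| ≤ M)
    (hex : ∃ x : Fin n → ℝ, (∀ i, |x i| ≤ 1) ∧ |eval x P| = M) : supNorm P = M := by
  obtain ⟨x, hx, hxM⟩ := hex
  refine IsGreatest.csSup_eq ⟨⟨x, hx, hxM.symm⟩, ?_⟩
  rintro _ ⟨y, hy, rfl⟩
  exact hle y hy

theorem supNorm_prod_rename {ι : Type*} [Fintype ι] {n : ι → ℕ} {N : ℕ}
    (Q : ∀ j, MvPolynomial (Fin (n j)) ℝ) (f : ∀ j, Fin (n j) → Fin N)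
    (hf : Function.Injective fun p : Σ j, Fin (n j) ↦ f p.1 p.2) :
    supNorm (∏ j, rename (f j) (Q j)) = ∏ j, supNorm (Q j) := by
  have abs_eval_prod (x : Fin N → ℝ) :
      |eval x (∏ j, rename (f j) (Q j))| = ∏ j, |eval (x ∘ f j) (Q j)| := by
    simp only [eval_prod, eval_rename, Finset.abs_prod]
  apply supNorm_eq_of_forall_le_of_exists
  · intro x hx
    rw [abs_eval_prod]
    exact Finset.prod_le_prod (fun _ _ ↦ abs_nonneg _)
      fun j _ ↦ abs_eval_le_supNorm (Q j) fun i ↦ hx (f j i)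
  · choose z hz hzQ using fun j ↦ exists_abs_eval_eq_supNorm (Q j)
    let x : Fin N → ℝ :=
      Function.extend (fun p : Σ j, Fin (n j) ↦ f p.1 p.2) (fun p ↦ z p.1 p.2) 0
    have x_apply (j : ι) (i : Fin (n j)) : x (f j i) = z j i :=
      hf.extend_apply (fun p ↦ z p.1 p.2) 0 ⟨j, i⟩
    have x_comp (j : ι) : x ∘ f j = z j := _root_.funext (x_apply j)
    refine ⟨x, fun l ↦ ?_, by simp only [abs_eval_prod, x_comp, hzQ]⟩
    by_cases hl : ∃ p : Σ j, Fin (n j), f p.1 p.2 = l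
    · obtain ⟨⟨j, i⟩, rfl⟩ := hl
      simpa only [x_apply] using hz j i
    · simp [x, Function.extend_apply' _ _ _ hl]

theorem abs_sq_sub_sq_add_mul_le {K : Type*} [Field K] [LinearOrder K] [IsStrictOrderedRing K]
    (a b : K) : |a ^ 2 - b ^ 2 + a * b| ≤ 5 / 4 * max (a ^ 2) (b ^ 2) := by
  have upper (c d : K) : c ^ 2 - d ^ 2 + c * d ≤ 5 / 4 * c ^ 2 :=
    calc c ^ 2 - d ^ 2 + c * d = 5 / 4 * c ^ 2 - (d - c / 2) ^ 2 := by ring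
      _ ≤ 5 / 4 * c ^ 2 := sub_le_self _ (sq_nonneg _)
  refine abs_le'.2 ⟨(upper a b).trans ?_, ?_⟩
  · gcongr
    exact le_max_left _ _
  · calc -(a ^ 2 - b ^ 2 + a * b) = b ^ 2 - (-a) ^ 2 + b * -a := by ring
      _ ≤ 5 / 4 * b ^ 2 := upper b (-a)
      _ ≤ 5 / 4 * max (a ^ 2) (b ^ 2) := by gcongr; exact le_max_right _ _

/-- The quadratic form `x² - y² + x y`, of which `R_m` is a product of `m / 2` copies. -/
noncomputable def quadraticBlock : MvPolynomial (Fin 2) ℝ :=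
  X 0 ^ 2 - X 1 ^ 2 + X 0 * X 1

theorem eval_quadraticBlock (x : Fin 2 → ℝ) :
    eval x quadraticBlock = x 0 ^ 2 - x 1 ^ 2 + x 0 * x 1 := by
  simp only [quadraticBlock, map_add, map_sub, map_mul, map_pow, eval_X]

theorem supNorm_quadraticBlock : supNorm quadraticBlock = 5 / 4 := by
  apply supNorm_eq_of_forall_le_of_exists
  · intro x hx
    have sq_le_one (i : Fin 2) : x i ^ 2 ≤ 1 := (sq_le_one_iff_abs_le_one _).2 (hx i)
    calc |eval x quadraticBlock| ≤ 5 / 4 * max (x 0 ^ 2) (x 1 ^ 2) := by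
          rw [eval_quadraticBlock]
          exact abs_sq_sub_sq_add_mul_le _ _
      _ ≤ 5 / 4 * 1 := by gcongr; exact max_le (sq_le_one 0) (sq_le_one 1)
      _ = 5 / 4 := mul_one _
  · refine ⟨![1, 1 / 2], ?_, ?_⟩
    · norm_num [Fin.forall_fin_two, abs_le]
    · norm_num [eval_quadraticBlock]

/-- The position among the `2 * k` variables of the `i`-th variable of the `j`-th pair, all counted
from `0`. -/
def pairIndex {k : ℕ} (j : Fin k) (i : Fin 2) : Fin (2 * k) :=
  ⟨2 * j + i, by omega⟩

theorem pairIndex_injective (k : ℕ) :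
    Function.Injective fun p : Σ _ : Fin k, Fin 2 ↦ pairIndex p.1 p.2 := by
  rintro ⟨j, i⟩ ⟨j', i'⟩ h
  have h_val : 2 * (j : ℕ) + i = 2 * j' + i' := congrArg Fin.val h
  obtain rfl : j = j' := by omega
  obtain rfl : i = i' := by omega
  rfl

theorem Rpoly_eq_prod_rename (k : ℕ) :
    Rpoly k = ∏ j : Fin k, rename (pairIndex j) quadraticBlock := by
  simp only [Rpoly, quadraticBlock, map_add, map_sub, map_mul, map_pow, rename_X]
  rfl

/-- For every even positive integer `m = 2k`, the `m`-homogeneous polynomial `R_m`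
satisfies `‖R_m‖ = (5/4)^{m/2}`. -/
theorem supNorm_Rpoly (k : ℕ) (hk : 0 < k) :
    supNorm (Rpoly k) = (5 / 4 : ℝ) ^ k := by
  calc supNorm (Rpoly k) = ∏ _j : Fin k, supNorm quadraticBlock := by
        rw [Rpoly_eq_prod_rename, supNorm_prod_rename _ _ (pairIndex_injective k)]
    _ = (5 / 4 : ℝ) ^ k := by
        rw [supNorm_quadraticBlock, Finset.prod_const, Finset.card_univ, Fintype.card_fin]
end

section
/- Define recursively the real polynomials Q_2(x_1,x_2) = x_1² − x_2² and Q_{2^m}(x_1,…,x_{2^m}) = Q_{2^{m−1}}(x_1,…,x_{2^{m−1}})² − Q_{2^{m−1}}(x_{2^{m−1}+1},…,x_{2^m})². Then for all positive integers m and n, the maximal absolute value of a coefficient of the polynomial Q_{2^m}^n satisfies |Q_{2^m}^n|_∞ ≥ (2^n/(n+1))^{2^m − 1}. -/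
open MvPolynomial

/-- The maximal absolute value of the coefficients of a real polynomial. -/
noncomputable def linfNorm {n : ℕ} (P : MvPolynomial (Fin n) ℝ) : ℝ :=
  ⨆ α : Fin n →₀ ℕ, |coeff α P|

/-- `Qpoly m` is the polynomial `Q_{2^{m+1}}` in `2^{m+1}` variables, defined recursively
by `Q_2(x₁,x₂) = x₁² - x₂²` and
`Q_{2^m}(x₁,…,x_{2^m}) = Q_{2^{m-1}}(x₁,…,x_{2^{m-1}})² - Q_{2^{m-1}}(x_{2^{m-1}+1},…,x_{2^m})²`. -/
noncomputable def Qpoly : (m : ℕ) → MvPolynomial (Fin (2 ^ (m + 1))) ℝ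
  | 0 => X ⟨0, by norm_num⟩ ^ 2 - X ⟨1, by norm_num⟩ ^ 2
  | (m + 1) =>
      (rename (fun i : Fin (2 ^ (m + 1)) =>
          (⟨i.1, by
            have h := i.2
            have h2 : (2 : ℕ) ^ (m + 1) ≤ 2 ^ (m + 2) :=
              Nat.pow_le_pow_right (by norm_num) (Nat.le_succ _)
            omega⟩ : Fin (2 ^ (m + 2)))) (Qpoly m)) ^ 2
      - (rename (fun i : Fin (2 ^ (m + 1)) =>
          (⟨2 ^ (m + 1) + i.1, by
            have h := i.2
            have h2 : (2 : ℕ) ^ (m + 2) = 2 ^ (m + 1) * 2 := pow_succ 2 (m + 1)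
            omega⟩ : Fin (2 ^ (m + 2)))) (Qpoly m)) ^ 2

/-!
If `A` is homogeneous of positive degree, the terms of the binomial expansion of
`(A(x) + B(y))^(k + l)` have distinct degrees in `x`, so they share no monomials, and since the
variables `x` and `y` are separate the largest coefficient of the `k`-th term is
`(k + l).choose k * |A^k|_∞ * |B^l|_∞`. For `A = P²` and `B = -R²`, taking `k` in the middle
bounds the binomial coefficient below by `b n = 2^n / (n + 1)`, the mean of the `n`-th row of
Pascal's triangle, where `n = k + l`. The log-convexity `b (k + l)² ≤ b (2 * k) * b (2 * l)` then
shows that a bound `b n ^ N` on `n`-th powers of both `P` and `R` yields `b n ^ (2 * N + 1)` for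
`P(x)² - R(y)²`, and `N ↦ 2 * N + 1` sends `2^m - 1` to `2^(m + 1) - 1`.
-/

section SeparateVariables

variable {σ τ υ R : Type*} [CommSemiring R] {f : σ → υ} {g : τ → υ}

theorem mapDomain_add_mapDomain_inj {M : Type*} [AddCommMonoid M]
    (hfg : (Sum.elim f g).Injective) {α α' : σ →₀ M} {β β' : τ →₀ M} :
    α.mapDomain f + β.mapDomain g = α'.mapDomain f + β'.mapDomain g ↔ α = α' ∧ β = β' := by
  have mapDomain_sumElim (a : σ →₀ M) (b : τ →₀ M) :
      a.mapDomain f + b.mapDomain g = (a.sumElim b).mapDomain (Sum.elim f g) := by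
    simp only [Finsupp.sumElim_eq_add, Finsupp.mapDomain_add, ← Finsupp.mapDomain_comp,
      Sum.elim_comp_inl, Sum.elim_comp_inr]
  rw [mapDomain_sumElim, mapDomain_sumElim, (Finsupp.mapDomain_injective hfg).eq_iff]
  exact Finsupp.sumFinsuppEquivProdFinsupp.symm.injective.eq_iff (a := (α, β)) (b := (α', β'))
    |>.trans Prod.mk_inj

theorem coeff_rename_mul_rename (hfg : (Sum.elim f g).Injective)
    (P : MvPolynomial σ R) (Q : MvPolynomial τ R) (α : σ →₀ ℕ) (β : τ →₀ ℕ) :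
    coeff (α.mapDomain f + β.mapDomain g) (rename f P * rename g Q) = coeff α P * coeff β Q := by
  classical
  induction P using MvPolynomial.induction_on' with
  | add P₁ P₂ h₁ h₂ => simp only [map_add, add_mul, coeff_add, h₁, h₂]
  | monomial u a =>
    induction Q using MvPolynomial.induction_on' with
    | add Q₁ Q₂ h₁ h₂ => simp only [map_add, mul_add, coeff_add, h₁, h₂]
    | monomial v b =>
      simp only [rename_monomial, monomial_mul, coeff_monomial, mapDomain_add_mapDomain_inj hfg,
        ite_zero_mul_ite_zero]

theorem coeff_rename_add_rename_pow (hfg : (Sum.elim f g).Injective)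
    {A : MvPolynomial σ R} {d : ℕ} (hA : A.IsHomogeneous d) (hd : d ≠ 0) (B : MvPolynomial τ R)
    {k : ℕ} {α : σ →₀ ℕ} (hα : α.degree = d * k) (l : ℕ) (β : τ →₀ ℕ) :
    coeff (α.mapDomain f + β.mapDomain g) ((rename f A + rename g B) ^ (k + l)) =
      coeff α (A ^ k) * coeff β (B ^ l) * (k + l).choose k := by
  have coeff_term (i j : ℕ) :
      coeff (α.mapDomain f + β.mapDomain g)
          (rename f A ^ i * rename g B ^ j * ((k + l).choose i : MvPolynomial υ R)) =
        coeff α (A ^ i) * coeff β (B ^ j) * (k + l).choose i := by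
    rw [← map_natCast (C : R →+* MvPolynomial υ R), mul_comm, coeff_C_mul, ← map_pow, ← map_pow,
      coeff_rename_mul_rename hfg, mul_comm]
  rw [add_pow, coeff_sum, Finset.sum_eq_single_of_mem k (Finset.mem_range.mpr (by lia)),
    coeff_term, Nat.add_sub_cancel_left]
  intro i _ hik
  have hdegree : α.degree ≠ d * i := by
    rw [hα]
    exact fun h => hik (Nat.eq_of_mul_eq_mul_left (Nat.pos_of_ne_zero hd) h).symm
  rw [coeff_term, (hA.pow i).coeff_eq_zero hdegree, zero_mul, zero_mul]

end SeparateVariables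

section LinfNorm

variable {a b c : ℕ}

theorem finite_range_abs_coeff {σ : Type*} (P : MvPolynomial σ ℝ) :
    (Set.range fun α => |coeff α P|).Finite := by
  classical
  refine ((insert 0 P.coeffs).finite_toSet.image (|·|)).subset ?_
  rintro _ ⟨α, rfl⟩
  refine ⟨coeff α P, ?_, rfl⟩
  by_cases h : coeff α P = 0
  · simp [h]
  · exact Finset.mem_insert_of_mem (coeff_mem_coeffs α h)

theorem abs_coeff_le_linfNorm (P : MvPolynomial (Fin a) ℝ) (α : Fin a →₀ ℕ) :
    |coeff α P| ≤ linfNorm P :=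
  le_ciSup (finite_range_abs_coeff P).bddAbove α

theorem exists_abs_coeff_eq_linfNorm (P : MvPolynomial (Fin a) ℝ) :
    ∃ α, |coeff α P| = linfNorm P :=
  (Set.range_nonempty _).csSup_mem (finite_range_abs_coeff P)

theorem linfNorm_nonneg (P : MvPolynomial (Fin a) ℝ) : 0 ≤ linfNorm P :=
  Real.iSup_nonneg fun _ => abs_nonneg _

theorem linfNorm_neg (P : MvPolynomial (Fin a) ℝ) : linfNorm (-P) = linfNorm P := by
  simp only [linfNorm, coeff_neg, abs_neg]

theorem linfNorm_neg_pow (P : MvPolynomial (Fin a) ℝ) (n : ℕ) :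
    linfNorm ((-P) ^ n) = linfNorm (P ^ n) := by
  rcases n.even_or_odd with hn | hn
  · rw [hn.neg_pow]
  · rw [hn.neg_pow, linfNorm_neg]

theorem one_le_linfNorm_X_pow (i : Fin a) (n : ℕ) :
    1 ≤ linfNorm (X i ^ n : MvPolynomial (Fin a) ℝ) := by
  simpa [coeff_X_pow] using abs_coeff_le_linfNorm (X i ^ n) (Finsupp.single i n)

theorem linfNorm_mul_linfNorm_mul_choose_le {f : Fin a → Fin c} {g : Fin b → Fin c}
    (hfg : (Sum.elim f g).Injective) {A : MvPolynomial (Fin a) ℝ} {d : ℕ}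
    (hA : A.IsHomogeneous d) (hd : d ≠ 0) (B : MvPolynomial (Fin b) ℝ) (k l : ℕ) :
    linfNorm (A ^ k) * linfNorm (B ^ l) * (k + l).choose k ≤
      linfNorm ((rename f A + rename g B) ^ (k + l)) := by
  obtain ⟨α, hα⟩ := exists_abs_coeff_eq_linfNorm (A ^ k)
  obtain ⟨β, hβ⟩ := exists_abs_coeff_eq_linfNorm (B ^ l)
  by_cases hdegree : α.degree = d * k
  · calc
      _ = |coeff (α.mapDomain f + β.mapDomain g) ((rename f A + rename g B) ^ (k + l))| := by
        rw [coeff_rename_add_rename_pow hfg hA hd B hdegree, abs_mul, abs_mul, hα, hβ,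
          Nat.abs_cast]
      _ ≤ _ := abs_coeff_le_linfNorm _ _
  · rw [← hα, (hA.pow k).coeff_eq_zero hdegree, abs_zero, zero_mul, zero_mul]
    exact linfNorm_nonneg _

end LinfNorm

/-- The mean `2 ^ n / (n + 1)` of the binomial coefficients in the `n`-th row of Pascal's
triangle, which is the base of the lower bound for the coefficients of `Qpoly m ^ n`. -/
noncomputable def binomialMean (n : ℕ) : ℝ :=
  2 ^ n / (n + 1)

theorem binomialMean_nonneg (n : ℕ) : 0 ≤ binomialMean n := by
  unfold binomialMean
  positivity

theorem binomialMean_le_choose_half (n : ℕ) : binomialMean n ≤ n.choose (n / 2) := by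
  have two_pow_le : 2 ^ n ≤ (n + 1) * n.choose (n / 2) := by
    simpa [Nat.sum_range_choose] using
      Finset.sum_le_card_nsmul (Finset.range (n + 1)) n.choose (n.choose (n / 2))
        fun i _ => Nat.choose_le_middle i n
  rw [binomialMean, div_le_iff₀' (by positivity)]
  exact_mod_cast two_pow_le

theorem binomialMean_add_sq_le (k l : ℕ) :
    binomialMean (k + l) ^ 2 ≤ binomialMean (2 * k) * binomialMean (2 * l) := by
  have am_gm : ((2 * k : ℝ) + 1) * (2 * l + 1) ≤ (k + l + 1) ^ 2 := by
    linarith [sq_nonneg ((k : ℝ) - l)]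
  simp only [binomialMean, div_mul_div_comm, div_pow]
  rw [← pow_add, ← pow_mul, ← mul_add, mul_comm (k + l) 2]
  push_cast
  gcongr

theorem binomialMean_pow_le_linfNorm_sq_sub_sq {a b c : ℕ} {f : Fin a → Fin c}
    {g : Fin b → Fin c} (hfg : (Sum.elim f g).Injective) {A : MvPolynomial (Fin a) ℝ}
    {B : MvPolynomial (Fin b) ℝ} {d N : ℕ} (hd : d ≠ 0) (hA : A.IsHomogeneous d)
    (hA_bound : ∀ n, binomialMean n ^ N ≤ linfNorm (A ^ n))
    (hB_bound : ∀ n, binomialMean n ^ N ≤ linfNorm (B ^ n)) (n : ℕ) :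
    binomialMean n ^ (2 * N + 1) ≤ linfNorm ((rename f A ^ 2 - rename g B ^ 2) ^ n) := by
  obtain ⟨k, l, hk, rfl⟩ : ∃ k l, k = n / 2 ∧ n = k + l := ⟨n / 2, n - n / 2, rfl, by lia⟩
  have hchoose : binomialMean (k + l) ≤ (k + l).choose k :=
    (binomialMean_le_choose_half (k + l)).trans_eq (by rw [← hk])
  calc
    binomialMean (k + l) ^ (2 * N + 1)
        = (binomialMean (k + l) ^ 2) ^ N * binomialMean (k + l) := by rw [pow_succ, pow_mul]
    _ ≤ (binomialMean (2 * k) * binomialMean (2 * l)) ^ N * (k + l).choose k := by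
      gcongr ?_ ^ N * ?_
      · exact binomialMean_nonneg _
      · exact pow_nonneg (mul_nonneg (binomialMean_nonneg _) (binomialMean_nonneg _)) N
      · exact binomialMean_add_sq_le k l
    _ = binomialMean (2 * k) ^ N * binomialMean (2 * l) ^ N * (k + l).choose k := by
      rw [mul_pow]
    _ ≤ linfNorm (A ^ (2 * k)) * linfNorm (B ^ (2 * l)) * (k + l).choose k := by
      gcongr
      · exact pow_nonneg (binomialMean_nonneg _) N
      · exact linfNorm_nonneg _
      · exact hA_bound _
      · exact hB_bound _
    _ = linfNorm ((A ^ 2) ^ k) * linfNorm ((-B ^ 2) ^ l) * (k + l).choose k := by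
      rw [linfNorm_neg_pow, pow_mul, pow_mul]
    _ ≤ linfNorm ((rename f (A ^ 2) + rename g (-B ^ 2)) ^ (k + l)) :=
      linfNorm_mul_linfNorm_mul_choose_le hfg (hA.pow 2) (mul_ne_zero hd two_ne_zero) _ k l
    _ = linfNorm ((rename f A ^ 2 - rename g B ^ 2) ^ (k + l)) := by
      rw [map_neg, map_pow, map_pow, ← sub_eq_add_neg]

theorem exists_injective_Qpoly_zero_eq :
    ∃ f g : Fin 1 → Fin (2 ^ (0 + 1)), (Sum.elim f g).Injective ∧
      Qpoly 0 = rename f (X 0) ^ 2 - rename g (X 0) ^ 2 := by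
  refine ⟨fun _ => ⟨0, by norm_num⟩, fun _ => ⟨1, by norm_num⟩, ?_, ?_⟩
  · exact (Function.injective_of_subsingleton _).sumElim (Function.injective_of_subsingleton _)
      (by simp)
  · simp only [Qpoly, rename_X]

theorem exists_injective_Qpoly_succ_eq (m : ℕ) :
    ∃ f g : Fin (2 ^ (m + 1)) → Fin (2 ^ (m + 2)), (Sum.elim f g).Injective ∧
      Qpoly (m + 1) = rename f (Qpoly m) ^ 2 - rename g (Qpoly m) ^ 2 := by
  refine ⟨_, _, Function.Injective.sumElim ?_ ?_ ?_, rfl⟩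
  · exact fun i j h => Fin.ext (Fin.mk.inj h)
  · exact fun i j h => Fin.ext (Nat.add_left_cancel (Fin.mk.inj h))
  · exact fun i j h => (i.isLt.trans_le (Nat.le_add_right _ j)).ne (Fin.mk.inj h)

theorem isHomogeneous_Qpoly (m : ℕ) : (Qpoly m).IsHomogeneous (2 ^ (m + 1)) := by
  induction m with
  | zero => exact (isHomogeneous_X_pow _ 2).sub (isHomogeneous_X_pow _ 2)
  | succ m ih =>
    obtain ⟨f, g, -, hQ⟩ := exists_injective_Qpoly_succ_eq m
    have isHomogeneous_sq (h : Fin (2 ^ (m + 1)) → Fin (2 ^ (m + 2))) :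
        (rename h (Qpoly m) ^ 2).IsHomogeneous (2 ^ (m + 2)) := by
      convert ih.rename_isHomogeneous.pow 2 using 1
      exact pow_succ 2 (m + 1)
    rw [hQ]
    exact (isHomogeneous_sq f).sub (isHomogeneous_sq g)

/-- For all positive integers `m` and `n` (here `Q_{2^m} = Qpoly (m-1)`, so `m+1` stands
for the positive integer `m` of the statement),
`|Q_{2^m}^n|_∞ ≥ (2^n/(n+1))^{2^m - 1}`. -/
theorem linfNorm_Qpoly_pow (m n : ℕ) (hn : 0 < n) :
    ((2 : ℝ) ^ n / (n + 1)) ^ (2 ^ (m + 1) - 1) ≤ linfNorm (Qpoly m ^ n) := by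
  suffices h : ∀ n, binomialMean n ^ (2 ^ (m + 1) - 1) ≤ linfNorm (Qpoly m ^ n) from h n
  induction m with
  | zero =>
    obtain ⟨f, g, hfg, hQ⟩ := exists_injective_Qpoly_zero_eq
    rw [hQ]
    exact binomialMean_pow_le_linfNorm_sq_sub_sq (N := 0) hfg one_ne_zero (isHomogeneous_X ℝ 0)
      (one_le_linfNorm_X_pow 0) (one_le_linfNorm_X_pow 0)
  | succ m ih =>
    obtain ⟨f, g, hfg, hQ⟩ := exists_injective_Qpoly_succ_eq m
    have exponent_succ : 2 ^ (m + 1 + 1) - 1 = 2 * (2 ^ (m + 1) - 1) + 1 := by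
      have := Nat.one_le_two_pow (n := m + 1)
      lia
    rw [hQ, exponent_succ]
    exact binomialMean_pow_le_linfNorm_sq_sub_sq hfg (by positivity) (isHomogeneous_Qpoly m)
      ih ih
end
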